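/- Let G be a second countable locally compact Hausdorff proper groupoid with unit space Y and left Haar system. Then there exists a continuous section φ of the Hilbert bundle L²(G)^∞ (not required to vanish at infinity) such that ‖φ(y)‖ = 1 for all y ∈ Y, φ is G-invariant (g·φ(s(g)) = φ(r(g)) for all g ∈ G), and each point of Y has a neighborhood on which φ(y) is of the form ((ψ_1)|_{G^y}, …, (ψ_n)|_{G^y}, 0, 0, …) with ψ_1,…,ψ_n ∈ C_c(G). -/

import Mathlib

/-!
The groupoid `G` is proper, so it has a cutoff function: a continuous `c ≥ 0` on `Y` that is not
identically zero on any orbit and such that `c ∘ s`, restricted to `r⁻¹(K)` with `K` a small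
compact set, has compact support (`exists_cutoff`).  Its orbit integral
`N(y) = ∫_{G^y} c(s(h)) dλ^y(h)` (`orbInt`) is continuous and strictly positive, and left invariance
of the Haar system makes it constant along orbits (`orbInt_invariant`).  Hence
`k(h) = √(c(s(h)) / N(r(h)))` restricts to a unit vector of `L²(G^y)` for every `y`, and
`k(g⁻¹h) = k(h)` whenever `r(h) = r(g)`, so `y ↦ k|_{G^y}`, placed in the zeroth coordinate, is an
invariant unit section of `L²(G)^∞`.  Near a given point of `Y` it equals the restriction of
`k · (χ ∘ r) ∈ C_c(G)` for a bump function `χ` (`SliceProper.exists_bump`), which gives the local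
form and with it continuity; a single nonzero coordinate suffices.

The fibers of the bundles are algebraic quotients `P / I_y P`, where `I_y P` is a span without
closure.  Pointwise computations with inner products transfer to these quotients because a vector
`p` with `⟨p,p⟩(y) = 0` factors as `q·t` with `t(y) = 0`, hence lies in the span
(`mem_fiberIdeal_of_ip_eq_zero`).
-/

noncomputable section
open scoped ZeroAtInfty
open Topology Filter ComplexConjugate

namespace Stabilization

/-- The set of continuous sections vanishing at infinity of a family of normed fibers,
relative to a given topology on the total space of the bundle. -/
def C0Sections {Y : Type} [TopologicalSpace Y] (H : Y → Type)
    [∀ y, NormedAddCommGroup (H y)] (tE : TopologicalSpace ((y : Y) × H y)) :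
    Set ((y : Y) → H y) :=
  {F | @Continuous Y ((y : Y) × H y) _ tE (fun y => ⟨y, F y⟩) ∧
    Tendsto (fun y => ‖F y‖) (cocompact Y) (nhds 0)}

/-- A Hilbert bundle over `Y` (Definition 2.1 of the paper): a family of Hilbert spaces
`H y` together with a second countable topology on the total space such that
(i) fiberwise addition and scalar multiplication are continuous, (ii) the norm along any
continuous section vanishing at infinity is continuous, (iii) the continuous sections
vanishing at infinity fill out every fiber, and (iv) the sets `U_{F,ε}` form a base. -/
structure HilbertBundle (Y : Type) [TopologicalSpace Y] where
  H : Y → Type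
  [nacg : ∀ y, NormedAddCommGroup (H y)]
  [ips : ∀ y, InnerProductSpace ℂ (H y)]
  [cpl : ∀ y, CompleteSpace (H y)]
  topE : TopologicalSpace ((y : Y) × H y)
  secondCountable : @SecondCountableTopology ((y : Y) × H y) topE
  add_cont : @Continuous {p : ((y : Y) × H y) × ((y : Y) × H y) // p.1.1 = p.2.1}
      ((y : Y) × H y)
      (@instTopologicalSpaceSubtype _ _ (@instTopologicalSpaceProd _ _ topE topE)) topE
      (fun p => ⟨p.1.1.1, p.1.1.2 + cast (congrArg H p.2).symm p.1.2.2⟩)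
  smul_cont : @Continuous (ℂ × (y : Y) × H y) ((y : Y) × H y)
      (@instTopologicalSpaceProd _ _ _ topE) topE
      (fun p => ⟨p.2.1, p.1 • p.2.2⟩)
  norm_cont : ∀ F ∈ C0Sections H topE, Continuous fun y => ‖F y‖
  fiber_full : ∀ (y : Y) (v : H y), ∃ F ∈ C0Sections H topE, F y = v
  isBasis : @TopologicalSpace.IsTopologicalBasis ((y : Y) × H y) topE
      {S | ∃ (U : Set Y) (F : (y : Y) → H y) (ε : ℝ), IsOpen U ∧ F ∈ C0Sections H topE ∧
        0 < ε ∧ S = {e | e.1 ∈ U ∧ ‖e.2 - F e.1‖ < ε}}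

attribute [instance] HilbertBundle.nacg HilbertBundle.ips HilbertBundle.cpl

/-- A Hilbert `C₀(Y)`-module structure on `P`: a right `C₀(Y)`-module action and a
`C₀(Y)`-valued inner product, complete for the norm `‖p‖ = ‖⟨p,p⟩‖^{1/2}` (completeness
being recorded by a `CompleteSpace` instance on `P` at use sites). -/
class HilbertCzeroModule (Y : Type) [TopologicalSpace Y] (P : Type)
    [NormedAddCommGroup P] [NormedSpace ℂ P] where
  msmul : P → C₀(Y, ℂ) → P
  minner : P → P → C₀(Y, ℂ)
  msmul_add_left : ∀ (p q : P) (f : C₀(Y, ℂ)), msmul (p + q) f = msmul p f + msmul q f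
  msmul_add_right : ∀ (p : P) (f g : C₀(Y, ℂ)), msmul p (f + g) = msmul p f + msmul p g
  msmul_mul : ∀ (p : P) (f g : C₀(Y, ℂ)), msmul (msmul p f) g = msmul p (f * g)
  msmul_csmul_left : ∀ (c : ℂ) (p : P) (f : C₀(Y, ℂ)), msmul (c • p) f = c • msmul p f
  msmul_csmul_right : ∀ (c : ℂ) (p : P) (f : C₀(Y, ℂ)), msmul p (c • f) = c • msmul p f
  minner_add_right : ∀ p q r : P, minner p (q + r) = minner p q + minner p r
  minner_conj : ∀ p q : P, minner p q = star (minner q p)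
  minner_csmul_right : ∀ (c : ℂ) (p q : P), minner p (c • q) = c • minner p q
  minner_msmul_right : ∀ (p q : P) (f : C₀(Y, ℂ)), minner p (msmul q f) = minner p q * f
  minner_self_re_nonneg : ∀ (p : P) (y : Y), 0 ≤ (minner p p y).re
  minner_self_im : ∀ (p : P) (y : Y), (minner p p y).im = 0
  norm_eq : ∀ p : P, ‖p‖ = Real.sqrt ‖minner p p‖

/-- The module action, with the base space explicit. -/
def modSMul (Y : Type) [TopologicalSpace Y] {P : Type} [NormedAddCommGroup P]
    [NormedSpace ℂ P] [HilbertCzeroModule Y P] (p : P) (f : C₀(Y, ℂ)) : P :=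
  HilbertCzeroModule.msmul p f

/-- The `C₀(Y)`-valued inner product, with the base space explicit. -/
def modIP (Y : Type) [TopologicalSpace Y] {P : Type} [NormedAddCommGroup P]
    [NormedSpace ℂ P] [HilbertCzeroModule Y P] (p q : P) : C₀(Y, ℂ) :=
  HilbertCzeroModule.minner p q

variable (Y : Type) [TopologicalSpace Y]
variable (P : Type) [NormedAddCommGroup P] [NormedSpace ℂ P] [HilbertCzeroModule Y P]

/-- `I_y P`: the closed submodule generated by products `p·f` with `f(y) = 0`. -/
def fiberIdeal (y : Y) : Submodule ℂ P :=
  Submodule.span ℂ {x | ∃ (f : C₀(Y, ℂ)) (p : P), f y = 0 ∧ x = modSMul Y p f}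

/-- The fiber `P_y = P / I_y P` of the Hilbert bundle associated to `P`. -/
abbrev Fib (y : Y) : Type := P ⧸ fiberIdeal Y P y

/-- `p ↦ p̂(y)`, the image of `p` in the fiber `P_y`. -/
def fibMk (y : Y) : P → Fib Y P y := Submodule.Quotient.mk

/-- The fiber norm of `p̂(y)`, computed from a representative. -/
def fibNormRep (y : Y) (p : P) : ℝ := Real.sqrt ((modIP Y p p) y).re

/-- The norm on the fiber `P_y` (the common value of `fibNormRep` over representatives). -/
def fibNormQ (y : Y) (h : Fib Y P y) : ℝ :=
  sInf {r | ∃ p : P, h = fibMk Y P y p ∧ r = fibNormRep Y P y p}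

/-- The total space `E_P = ⊔_y P_y` of the bundle associated to `P`. -/
abbrev TotalP : Type := (y : Y) × Fib Y P y

/-- The basic sets `U_{p,ε}` of the bundle `E_P`. -/
def basisP : Set (Set (TotalP Y P)) :=
  {S | ∃ (U : Set Y) (p : P) (ε : ℝ), IsOpen U ∧ 0 < ε ∧
    S = {e : TotalP Y P | e.1 ∈ U ∧ fibNormQ Y P e.1 (e.2 - fibMk Y P e.1 p) < ε}}

/-- The topology on `E_P` generated by the sets `U_{p,ε}`. -/
def topEP : TopologicalSpace (TotalP Y P) := TopologicalSpace.generateFrom (basisP Y P)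

/-- The continuous sections of `E_P` vanishing at infinity. -/
def C0SectionsP : Set ((y : Y) → Fib Y P y) :=
  {F | @Continuous Y (TotalP Y P) _ (topEP Y P) (fun y => ⟨y, F y⟩) ∧
    Tendsto (fun y => fibNormQ Y P y (F y)) (cocompact Y) (nhds 0)}

/-- The section `p̂` associated to `p ∈ P`. -/
def hatSec (p : P) : (y : Y) → Fib Y P y := fun y => fibMk Y P y p

/-- Transport between fibers of `E_P` over equal base points. -/
def fcast {y z : Y} (h : y = z) : Fib Y P y → Fib Y P z := fun v => h ▸ v


variable (Y : Type) [TopologicalSpace Y]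

/-- A second countable locally compact Hausdorff proper topological groupoid with unit
space `Y`.  Multiplication is recorded as a total map which is only constrained on
composable pairs. -/
structure LCGroupoid where
  G : Type
  [topG : TopologicalSpace G]
  [t2G : T2Space G]
  [lcG : LocallyCompactSpace G]
  [scG : SecondCountableTopology G]
  [mG : MeasurableSpace G]
  [bG : BorelSpace G]
  r : G → Y
  s : G → Y
  unit : Y → G
  mul : G → G → G
  inv : G → G
  unit_embedding : Topology.IsEmbedding unit
  r_unit : ∀ y, r (unit y) = y
  s_unit : ∀ y, s (unit y) = y
  r_cont : Continuous r
  s_cont : Continuous s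
  inv_cont : Continuous inv
  mul_cont : Continuous fun p : {p : G × G // s p.1 = r p.2} => mul p.1.1 p.1.2
  r_mul : ∀ g h, s g = r h → r (mul g h) = r g
  s_mul : ∀ g h, s g = r h → s (mul g h) = s h
  mul_assoc : ∀ g h k, s g = r h → s h = r k → mul (mul g h) k = mul g (mul h k)
  mul_unit : ∀ g, mul g (unit (s g)) = g
  unit_mul : ∀ g, mul (unit (r g)) g = g
  r_inv : ∀ g, r (inv g) = s g
  s_inv : ∀ g, s (inv g) = r g
  mul_inv : ∀ g, mul g (inv g) = unit (r g)
  inv_mul : ∀ g, mul (inv g) g = unit (s g)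
  proper : IsProperMap fun g => (r g, s g)

attribute [instance] LCGroupoid.topG LCGroupoid.t2G LCGroupoid.lcG LCGroupoid.scG
  LCGroupoid.mG LCGroupoid.bG

variable (Gp : LCGroupoid Y)

/-- A left Haar system `{λ^y}` for the groupoid `Gp`:  `λ^y` is a Radon-type measure
concentrated on `G^y = r⁻¹(y)` with support `G^y`, varying continuously, and
left invariant. -/
structure HaarSystem where
  lam : Y → MeasureTheory.Measure Gp.G
  concentrated : ∀ y, lam y ((Gp.r ⁻¹' {y})ᶜ) = 0
  full : ∀ (y : Y) (U : Set Gp.G), IsOpen U → (U ∩ Gp.r ⁻¹' {y}).Nonempty → lam y U ≠ 0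
  finiteOnCompacts : ∀ (y : Y) (K : Set Gp.G), IsCompact K → lam y K ≠ ⊤
  integral_continuous : ∀ F : Gp.G → ℂ, Continuous F → HasCompactSupport F →
    Continuous fun y => ∫ g, F g ∂(lam y)
  left_invariant : ∀ (g₀ : Gp.G) (F : Gp.G → ℂ), Continuous F → HasCompactSupport F →
    ∫ g, F (Gp.mul g₀ g) ∂(lam (Gp.s g₀)) = ∫ g, F g ∂(lam (Gp.r g₀))

/-- Continuous compactly supported functions on the groupoid `Gp`. -/
def CcFun : Type := {F : Gp.G → ℂ // Continuous F ∧ HasCompactSupport F}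


section GroupoidActions

variable {Y : Type} [TopologicalSpace Y] (Gp : LCGroupoid Y)
variable (P : Type) [NormedAddCommGroup P] [NormedSpace ℂ P] [HilbertCzeroModule Y P]

/-- A continuous, unitary left action of the groupoid `Gp` on the Hilbert bundle `E_P`
associated to the Hilbert `C₀(Y)`-module `P`: this is the datum making `P` a
`G`-Hilbert module. -/
structure GAction where
  act : (g : Gp.G) → Fib Y P (Gp.s g) → Fib Y P (Gp.r g)
  act_add : ∀ (g : Gp.G) (v w : Fib Y P (Gp.s g)), act g (v + w) = act g v + act g w
  act_csmul : ∀ (g : Gp.G) (c : ℂ) (v : Fib Y P (Gp.s g)), act g (c • v) = c • act g v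
  act_norm : ∀ (g : Gp.G) (v : Fib Y P (Gp.s g)),
    fibNormQ Y P (Gp.r g) (act g v) = fibNormQ Y P (Gp.s g) v
  act_surjective : ∀ g : Gp.G, Function.Surjective (act g)
  act_unit : ∀ (y : Y) (v : Fib Y P y),
    act (Gp.unit y) (fcast Y P (Gp.s_unit y).symm v) = fcast Y P (Gp.r_unit y).symm v
  act_mul : ∀ (g h : Gp.G) (hc : Gp.s g = Gp.r h) (v : Fib Y P (Gp.s h)),
    act (Gp.mul g h) (fcast Y P (Gp.s_mul g h hc).symm v) =
      fcast Y P (Gp.r_mul g h hc).symm (act g (fcast Y P hc.symm (act h v)))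
  act_cont : @Continuous {q : Gp.G × TotalP Y P // Gp.s q.1 = q.2.1} (TotalP Y P)
    (@instTopologicalSpaceSubtype _ _ (@instTopologicalSpaceProd _ _ _ (topEP Y P)))
    (topEP Y P)
    (fun q => ⟨Gp.r q.1.1, act q.1.1 (fcast Y P q.2.symm q.1.2.2)⟩)

variable {Gp P}
variable {Q : Type} [NormedAddCommGroup Q] [NormedSpace ℂ Q] [HilbertCzeroModule Y Q]

/-- A `G`-equivariant unitary isomorphism of `G`-Hilbert modules:  a bijective,
`ℂ`-linear, `C₀(Y)`-linear, inner-product preserving map intertwining the `G`-actions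
on the associated Hilbert bundles. -/
def IsGEquivariantUnitary (T : P → Q) (AP : GAction Gp P) (AQ : GAction Gp Q) : Prop :=
  Function.Bijective T ∧
  (∀ p p' : P, T (p + p') = T p + T p') ∧
  (∀ (c : ℂ) (p : P), T (c • p) = c • T p) ∧
  (∀ (p : P) (f : C₀(Y, ℂ)), T (modSMul Y p f) = modSMul Y (T p) f) ∧
  (∀ p p' : P, modIP Y (T p) (T p') = modIP Y p p') ∧
  (∀ (g : Gp.G) (p p' : P),
      AP.act g (fibMk Y P (Gp.s g) p) = fibMk Y P (Gp.r g) p' →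
      AQ.act g (fibMk Y Q (Gp.s g) (T p)) = fibMk Y Q (Gp.r g) (T p'))

/-- Equivalence of `G`-Hilbert modules: existence of a `G`-equivariant unitary. -/
def GEquiv (AP : GAction Gp P) (AQ : GAction Gp Q) : Prop :=
  ∃ T : P → Q, IsGEquivariantUnitary T AP AQ

end GroupoidActions

section ModuleConstructions

variable {Y : Type} [TopologicalSpace Y] (Gp : LCGroupoid Y)

/-- Data exhibiting a Hilbert `C₀(Y)`-module `PG` as the completion `P_G` of the
pre-Hilbert `C₀(Y)`-module `C_c(G)`, with module action `F·f = F·(f∘r)` and inner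
product `⟨F₁,F₂⟩(y) = ∫_{G^y} conj F₁ · F₂ dλ^y`. -/
structure PGData (hs : HaarSystem Y Gp) (PG : Type) [NormedAddCommGroup PG]
    [NormedSpace ℂ PG] [HilbertCzeroModule Y PG] where
  emb : CcFun Y Gp → PG
  emb_add : ∀ F₁ F₂ F₃ : CcFun Y Gp, F₃.1 = F₁.1 + F₂.1 → emb F₃ = emb F₁ + emb F₂
  emb_csmul : ∀ (c : ℂ) (F₁ F₃ : CcFun Y Gp), F₃.1 = c • F₁.1 → emb F₃ = c • emb F₁
  emb_msmul : ∀ (F₁ F₃ : CcFun Y Gp) (f : C₀(Y, ℂ)),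
    F₃.1 = (fun g => F₁.1 g * f (Gp.r g)) → emb F₃ = modSMul Y (emb F₁) f
  emb_inner : ∀ (F₁ F₂ : CcFun Y Gp) (y : Y),
    modIP Y (emb F₁) (emb F₂) y = ∫ g, conj (F₁.1 g) * F₂.1 g ∂(hs.lam y)
  emb_dense : ∀ (p : PG) (ε : ℝ), 0 < ε → ∃ F : CcFun Y Gp, ‖p - emb F‖ < ε

variable {Gp}

/-- The natural left translation action of `G` on `L²(G) = E_{P_G}`, characterized on
the dense image of `C_c(G)` by `(g·ξ)(h) = ξ(g⁻¹h)` for `h ∈ G^{r(g)}`. -/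
def IsNaturalPGAction {hs : HaarSystem Y Gp} {PG : Type} [NormedAddCommGroup PG]
    [NormedSpace ℂ PG] [HilbertCzeroModule Y PG] (d : PGData Gp hs PG)
    (A : GAction Gp PG) : Prop :=
  ∀ (g : Gp.G) (F F' : CcFun Y Gp),
    (∀ h : Gp.G, Gp.r h = Gp.r g → F'.1 h = F.1 (Gp.mul (Gp.inv g) h)) →
    A.act g (fibMk Y PG (Gp.s g) (d.emb F)) = fibMk Y PG (Gp.r g) (d.emb F')

end ModuleConstructions

section TensorSum

/-- Data exhibiting `R` as the interior tensor product `P ⊗_{C₀(Y)} Q` of two Hilbert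
`C₀(Y)`-modules: a balanced bilinear map with dense span satisfying
`⟨p₁⊗q₁, p₂⊗q₂⟩ = ⟨p₁,p₂⟩⟨q₁,q₂⟩`. -/
structure TensorData (Y : Type) [TopologicalSpace Y] (P Q R : Type)
    [NormedAddCommGroup P] [NormedSpace ℂ P] [HilbertCzeroModule Y P]
    [NormedAddCommGroup Q] [NormedSpace ℂ Q] [HilbertCzeroModule Y Q]
    [NormedAddCommGroup R] [NormedSpace ℂ R] [HilbertCzeroModule Y R] where
  t : P → Q → R
  t_add_left : ∀ (p p' : P) (q : Q), t (p + p') q = t p q + t p' q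
  t_add_right : ∀ (p : P) (q q' : Q), t p (q + q') = t p q + t p q'
  t_csmul_left : ∀ (c : ℂ) (p : P) (q : Q), t (c • p) q = c • t p q
  t_csmul_right : ∀ (c : ℂ) (p : P) (q : Q), t p (c • q) = c • t p q
  t_msmul_left : ∀ (p : P) (q : Q) (f : C₀(Y, ℂ)), t (modSMul Y p f) q = modSMul Y (t p q) f
  t_msmul_right : ∀ (p : P) (q : Q) (f : C₀(Y, ℂ)), t p (modSMul Y q f) = modSMul Y (t p q) f
  t_inner : ∀ (p p' : P) (q q' : Q),
    modIP Y (t p q) (t p' q') = modIP Y p p' * modIP Y q q'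
  t_dense : ∀ (x : R) (ε : ℝ), 0 < ε →
    ∃ (n : ℕ) (ps : Fin n → P) (qs : Fin n → Q), ‖x - ∑ i, t (ps i) (qs i)‖ < ε

/-- Data exhibiting `S` as the Hilbert `C₀(Y)`-module direct sum `P ⊕ Q`. -/
structure SumData (Y : Type) [TopologicalSpace Y] (P Q S : Type)
    [NormedAddCommGroup P] [NormedSpace ℂ P] [HilbertCzeroModule Y P]
    [NormedAddCommGroup Q] [NormedSpace ℂ Q] [HilbertCzeroModule Y Q]
    [NormedAddCommGroup S] [NormedSpace ℂ S] [HilbertCzeroModule Y S] where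
  inl : P → S
  inr : Q → S
  inl_add : ∀ p p' : P, inl (p + p') = inl p + inl p'
  inr_add : ∀ q q' : Q, inr (q + q') = inr q + inr q'
  inl_csmul : ∀ (c : ℂ) (p : P), inl (c • p) = c • inl p
  inr_csmul : ∀ (c : ℂ) (q : Q), inr (c • q) = c • inr q
  inl_msmul : ∀ (p : P) (f : C₀(Y, ℂ)), inl (modSMul Y p f) = modSMul Y (inl p) f
  inr_msmul : ∀ (q : Q) (f : C₀(Y, ℂ)), inr (modSMul Y q f) = modSMul Y (inr q) f
  inner_ll : ∀ p p' : P, modIP Y (inl p) (inl p') = modIP Y p p'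
  inner_rr : ∀ q q' : Q, modIP Y (inr q) (inr q') = modIP Y q q'
  inner_lr : ∀ (p : P) (q : Q), modIP Y (inl p) (inr q) = 0
  total : ∀ x : S, ∃ (p : P) (q : Q), x = inl p + inr q

/-- Data exhibiting `S` as the Hilbert `C₀(Y)`-module direct sum `⊕_{i=1}^∞ P i` of a
sequence of Hilbert `C₀(Y)`-modules: the module of sequences `{p_i}`, `p_i ∈ P i`, with
`Σ_i ⟨p_i,p_i⟩` convergent in `C₀(Y)`. -/
structure InftySumData (Y : Type) [TopologicalSpace Y] (Pf : ℕ → Type) (S : Type)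
    [∀ i, NormedAddCommGroup (Pf i)] [∀ i, NormedSpace ℂ (Pf i)]
    [∀ i, HilbertCzeroModule Y (Pf i)]
    [NormedAddCommGroup S] [NormedSpace ℂ S] [HilbertCzeroModule Y S] where
  proj : (i : ℕ) → S → Pf i
  proj_add : ∀ (i : ℕ) (x x' : S), proj i (x + x') = proj i x + proj i x'
  proj_csmul : ∀ (i : ℕ) (c : ℂ) (x : S), proj i (c • x) = c • proj i x
  proj_msmul : ∀ (i : ℕ) (x : S) (f : C₀(Y, ℂ)),
    proj i (modSMul Y x f) = modSMul Y (proj i x) f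
  proj_inner : ∀ x x' : S, HasSum (fun i => modIP Y (proj i x) (proj i x')) (modIP Y x x')
  proj_injective : ∀ x x' : S, (∀ i, proj i x = proj i x') → x = x'
  proj_surjective : ∀ u : (i : ℕ) → Pf i, Summable (fun i => modIP Y (u i) (u i)) →
    ∃ x : S, ∀ i, proj i x = u i

variable {Y : Type} [TopologicalSpace Y] {Gp : LCGroupoid Y}
variable {P Q R S : Type}
  [NormedAddCommGroup P] [NormedSpace ℂ P] [HilbertCzeroModule Y P]
  [NormedAddCommGroup Q] [NormedSpace ℂ Q] [HilbertCzeroModule Y Q]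
  [NormedAddCommGroup R] [NormedSpace ℂ R] [HilbertCzeroModule Y R]
  [NormedAddCommGroup S] [NormedSpace ℂ S] [HilbertCzeroModule Y S]

/-- The diagonal `G`-action on a tensor product `P ⊗_{C₀(Y)} Q`. -/
def IsDiagonalAction (td : TensorData Y P Q R) (AP : GAction Gp P) (AQ : GAction Gp Q)
    (AR : GAction Gp R) : Prop :=
  ∀ (g : Gp.G) (p p' : P) (q q' : Q),
    AP.act g (fibMk Y P (Gp.s g) p) = fibMk Y P (Gp.r g) p' →
    AQ.act g (fibMk Y Q (Gp.s g) q) = fibMk Y Q (Gp.r g) q' →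
    AR.act g (fibMk Y R (Gp.s g) (td.t p q)) = fibMk Y R (Gp.r g) (td.t p' q')

/-- The coordinatewise `G`-action on a direct sum `P ⊕ Q`. -/
def IsCoordinateSumAction (sd : SumData Y P Q S) (AP : GAction Gp P) (AQ : GAction Gp Q)
    (AS : GAction Gp S) : Prop :=
  (∀ (g : Gp.G) (p p' : P),
    AP.act g (fibMk Y P (Gp.s g) p) = fibMk Y P (Gp.r g) p' →
    AS.act g (fibMk Y S (Gp.s g) (sd.inl p)) = fibMk Y S (Gp.r g) (sd.inl p')) ∧
  (∀ (g : Gp.G) (q q' : Q),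
    AQ.act g (fibMk Y Q (Gp.s g) q) = fibMk Y Q (Gp.r g) q' →
    AS.act g (fibMk Y S (Gp.s g) (sd.inr q)) = fibMk Y S (Gp.r g) (sd.inr q'))

/-- The coordinatewise `G`-action on an infinite direct sum `⊕_{i=1}^∞ P i`. -/
def IsCoordinateInftyAction {Pf : ℕ → Type} [∀ i, NormedAddCommGroup (Pf i)]
    [∀ i, NormedSpace ℂ (Pf i)] [∀ i, HilbertCzeroModule Y (Pf i)]
    (d : InftySumData Y Pf S) (Af : (i : ℕ) → GAction Gp (Pf i))
    (AS : GAction Gp S) : Prop :=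
  ∀ (g : Gp.G) (x x' : S),
    AS.act g (fibMk Y S (Gp.s g) x) = fibMk Y S (Gp.r g) x' →
    ∀ i, (Af i).act g (fibMk Y (Pf i) (Gp.s g) (d.proj i x)) =
      fibMk Y (Pf i) (Gp.r g) (d.proj i x')

end TensorSum


/-! ### Hilbert `C₀(Y)`-modules and their fibers -/

section ModuleLemmas

variable {Y : Type} [TopologicalSpace Y]
variable {P : Type} [NormedAddCommGroup P] [NormedSpace ℂ P] [HilbertCzeroModule Y P]

lemma ip_add_right (p q r : P) (y : Y) :
    modIP Y p (q + r) y = modIP Y p q y + modIP Y p r y := by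
  simp only [modIP, HilbertCzeroModule.minner_add_right, ZeroAtInftyContinuousMap.add_apply]

lemma ip_conj (p q : P) (y : Y) : modIP Y p q y = conj (modIP Y q p y) := by
  simp only [modIP]
  rw [HilbertCzeroModule.minner_conj p q]
  rfl

lemma ip_csmul_right (c : ℂ) (p q : P) (y : Y) :
    modIP Y p (c • q) y = c * modIP Y p q y := by
  simp only [modIP, HilbertCzeroModule.minner_csmul_right, ZeroAtInftyContinuousMap.smul_apply,
    smul_eq_mul]

lemma ip_msmul_right (p q : P) (f : C₀(Y, ℂ)) (y : Y) :
    modIP Y p (modSMul Y q f) y = modIP Y p q y * f y := by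
  simp only [modIP, modSMul, HilbertCzeroModule.minner_msmul_right,
    ZeroAtInftyContinuousMap.mul_apply]

lemma ip_zero_right (p : P) (y : Y) : modIP Y p 0 y = 0 := by
  have h := ip_csmul_right (0 : ℂ) p 0 y
  simpa using h

lemma ip_sub_right (p q r : P) (y : Y) :
    modIP Y p (q - r) y = modIP Y p q y - modIP Y p r y := by
  have h := ip_add_right p (q - r) r y
  rw [sub_add_cancel] at h
  rw [h]; ring

lemma ip_add_left (p q r : P) (y : Y) :
    modIP Y (p + q) r y = modIP Y p r y + modIP Y q r y := by
  rw [ip_conj, ip_add_right, map_add, ← ip_conj, ← ip_conj]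

lemma ip_sub_left (p q r : P) (y : Y) :
    modIP Y (p - q) r y = modIP Y p r y - modIP Y q r y := by
  rw [ip_conj, ip_sub_right, map_sub, ← ip_conj, ← ip_conj]

lemma ip_msmul_left (p q : P) (f : C₀(Y, ℂ)) (y : Y) :
    modIP Y (modSMul Y p f) q y = conj (f y) * modIP Y p q y := by
  rw [ip_conj, ip_msmul_right, map_mul, ← ip_conj, mul_comm]

lemma ip_self_eq_ofReal (p : P) (y : Y) :
    modIP Y p p y = ((modIP Y p p y).re : ℂ) := by
  apply Complex.ext
  · simp
  · exact (HilbertCzeroModule.minner_self_im p y).trans (Complex.ofReal_im _).symm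

lemma ip_self_nonneg (p : P) (y : Y) : 0 ≤ (modIP Y p p y).re :=
  HilbertCzeroModule.minner_self_re_nonneg p y

lemma norm_apply_le_norm (f : C₀(Y, ℂ)) (y : Y) : ‖f y‖ ≤ ‖f‖ := by
  rw [← ZeroAtInftyContinuousMap.norm_toBCF_eq_norm]
  exact f.toBCF.norm_coe_le_norm y

lemma norm_le_of_apply_le (f : C₀(Y, ℂ)) {C : ℝ} (hC : 0 ≤ C) (h : ∀ y, ‖f y‖ ≤ C) :
    ‖f‖ ≤ C := by
  rw [← ZeroAtInftyContinuousMap.norm_toBCF_eq_norm]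
  exact (BoundedContinuousFunction.norm_le hC).2 h

lemma ip_self_re_le (p : P) (y : Y) : (modIP Y p p y).re ≤ ‖p‖ ^ 2 := by
  rw [HilbertCzeroModule.norm_eq (Y := Y) p, Real.sq_sqrt (norm_nonneg _)]
  exact (Complex.re_le_norm _).trans (norm_apply_le_norm _ y)

variable (Y) in
lemma norm_le_of_ip_le (p : P) {C : ℝ} (hC : 0 ≤ C)
    (h : ∀ y : Y, (modIP Y p p y).re ≤ C ^ 2) : ‖p‖ ≤ C := by
  rw [HilbertCzeroModule.norm_eq (Y := Y) p]
  refine Real.sqrt_le_iff.2 ⟨hC, norm_le_of_apply_le _ (sq_nonneg C) fun y => ?_⟩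
  have h1 : HilbertCzeroModule.minner p p y = ((modIP Y p p y).re : ℂ) := ip_self_eq_ofReal p y
  rw [h1, Complex.norm_real, Real.norm_of_nonneg (ip_self_nonneg p y)]
  exact h y

lemma msmul_sub_left (p q : P) (f : C₀(Y, ℂ)) :
    modSMul Y (p - q) f = modSMul Y p f - modSMul Y q f := by
  have h := HilbertCzeroModule.msmul_add_left (p - q) q f
  rw [sub_add_cancel] at h
  exact (sub_eq_of_eq_add h).symm

lemma msmul_sub_right (p : P) (f g : C₀(Y, ℂ)) :
    modSMul Y p (f - g) = modSMul Y p f - modSMul Y p g := by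
  have h := HilbertCzeroModule.msmul_add_right p (f - g) g
  rw [sub_add_cancel] at h
  exact (sub_eq_of_eq_add h).symm

lemma norm_msmul_le (p : P) (f : C₀(Y, ℂ)) : ‖modSMul Y p f‖ ≤ ‖p‖ * ‖f‖ := by
  refine norm_le_of_ip_le Y _ (by positivity) fun y => ?_
  rw [ip_msmul_left, ip_msmul_right, ip_self_eq_ofReal]
  have e : conj (f y) * (((modIP Y p p y).re : ℂ) * f y)
      = (((modIP Y p p y).re * ‖f y‖ ^ 2 : ℝ) : ℂ) := by
    push_cast
    rw [← Complex.conj_mul']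
    ring
  rw [e, Complex.ofReal_re, mul_pow]
  have := norm_apply_le_norm f y
  have := ip_self_re_le p y
  gcongr

/-- A real function that is continuous and bounded by a multiple of a function vanishing at
infinity, as an element of `C₀(Y, ℂ)`. -/
def czeroOfReal (f t : Y → ℝ) (C : ℝ) (hf : Continuous f)
    (ht : Tendsto t (cocompact Y) (𝓝 0)) (h : ∀ y, |f y| ≤ C * t y) : C₀(Y, ℂ) where
  toFun y := (f y : ℂ)
  continuous_toFun := Complex.continuous_ofReal.comp hf
  zero_at_infty' := by
    refine squeeze_zero_norm (a := fun y => C * t y) (fun y => ?_) (by simpa using ht.const_mul C)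
    simpa using h y

/-- A vector of length zero in the fiber at `y` lies in `I_y P`.  Writing
`⟨p,p⟩ = t⁴`, the elements `p·t/(t²+δ²)` converge as `δ → 0` to some `q` with `p = q·t`. -/
lemma mem_fiberIdeal_of_ip_eq_zero [CompleteSpace P] (p : P) (y : Y)
    (h : (modIP Y p p y).re = 0) : p ∈ fiberIdeal Y P y := by
  set b : Y → ℝ := fun y => (modIP Y p p y).re with hb
  have hb0 : ∀ y, 0 ≤ b y := fun y => ip_self_nonneg p y
  have hbc : Continuous b := Complex.continuous_re.comp (modIP Y p p).continuous_toFun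
  have hbt : Tendsto b (cocompact Y) (𝓝 0) := by
    have h0 := (Complex.continuous_re.tendsto 0).comp (modIP Y p p).zero_at_infty'
    rwa [Complex.zero_re] at h0
  set t : Y → ℝ := fun y => √(√(b y)) with ht
  have ht0 : ∀ y, 0 ≤ t y := fun y => Real.sqrt_nonneg _
  have htc : Continuous t := hbc.sqrt.sqrt
  have htt : Tendsto t (cocompact Y) (𝓝 0) := by
    simpa using hbt.sqrt.sqrt
  have ht4 : ∀ y, b y = (t y ^ 2) ^ 2 := fun y => by
    rw [Real.sq_sqrt (Real.sqrt_nonneg _), Real.sq_sqrt (hb0 y)]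
  -- the real form of the norm estimate for `p·f`
  have key : ∀ (z : P) (k : Y → ℝ) (C : ℝ), 0 ≤ C →
      (∀ y, modIP Y z z y = ((b y * k y ^ 2 : ℝ) : ℂ)) → (∀ y, |t y ^ 2 * k y| ≤ C) →
      ‖z‖ ≤ C := by
    intro z k C hC hz hk
    refine norm_le_of_ip_le Y z hC fun y => ?_
    rw [hz, Complex.ofReal_re, ht4, ← mul_pow]
    exact sq_le_sq' (neg_le_of_abs_le (hk y)) (le_of_abs_le (hk y))
  let δ : ℕ → ℝ := fun n => 1 / ((n : ℝ) + 1)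
  have hδ : ∀ n, 0 < δ n := fun n => Nat.one_div_pos_of_nat
  have hδt : Tendsto δ atTop (𝓝 0) := tendsto_one_div_add_atTop_nhds_zero_nat
  have hden : ∀ n y, 0 < t y ^ 2 + δ n ^ 2 := fun n y => by
    have := hδ n
    positivity
  let gr : ℕ → Y → ℝ := fun n y => t y / (t y ^ 2 + δ n ^ 2)
  let g : ℕ → C₀(Y, ℂ) := fun n => czeroOfReal (gr n) t ((δ n ^ 2)⁻¹)
    (htc.div (by fun_prop) fun y => (hden n y).ne') htt fun y => by
      have h1 := hδ n
      rw [abs_of_nonneg (div_nonneg (ht0 y) (hden n y).le), div_eq_mul_inv, mul_comm]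
      have h2 := ht0 y
      gcongr
      nlinarith [sq_nonneg (t y)]
  let tc : C₀(Y, ℂ) := czeroOfReal t t 1 htc htt fun y => by rw [abs_of_nonneg (ht0 y), one_mul]
  have hg : ∀ n y, g n y = (gr n y : ℂ) := fun n y => rfl
  have htcy : ∀ y, tc y = (t y : ℂ) := fun y => rfl
  have hbip : ∀ y, modIP Y p p y = (b y : ℂ) := fun y => ip_self_eq_ofReal p y
  -- `t² · t/(t²+δ²)` is within `δ` of `t`
  have hgδ : ∀ n y, |t y ^ 2 * gr n y - t y| ≤ δ n := by
    intro n y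
    have e : t y ^ 2 * gr n y - t y = - (δ n ^ 2 * t y / (t y ^ 2 + δ n ^ 2)) := by
      have := (hden n y).ne'
      simp only [gr]
      field_simp
      ring
    have h1 := hδ n
    have h2 := ht0 y
    rw [e, abs_neg, abs_of_nonneg (div_nonneg (by positivity) (hden n y).le),
      div_le_iff₀ (hden n y)]
    nlinarith [sq_nonneg (t y - δ n), mul_nonneg h1.le h2]
  let q : ℕ → P := fun n => modSMul Y p (g n)
  have hqd : ∀ m n, ‖q m - q n‖ ≤ δ m + δ n := by
    intro m n
    have e : q m - q n = modSMul Y p (g m - g n) := (msmul_sub_right _ _ _).symm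
    rw [e]
    refine key _ (fun y => gr m y - gr n y) _ (add_nonneg (hδ m).le (hδ n).le) (fun y => ?_)
      fun y => ?_
    · rw [ip_msmul_left, ip_msmul_right, ZeroAtInftyContinuousMap.sub_apply, hg, hg, hbip,
        ← Complex.ofReal_sub, Complex.conj_ofReal]
      push_cast
      ring
    · have e2 : t y ^ 2 * (gr m y - gr n y)
          = (t y ^ 2 * gr m y - t y) - (t y ^ 2 * gr n y - t y) := by ring
      rw [e2]
      exact (abs_sub _ _).trans (add_le_add (hgδ m y) (hgδ n y))
  have hcau : CauchySeq q := by
    rw [Metric.cauchySeq_iff]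
    intro ε hε
    obtain ⟨N, hN⟩ := (hδt.eventually (gt_mem_nhds (half_pos hε))).exists_forall_of_atTop
    refine ⟨N, fun m hm n hn => ?_⟩
    rw [dist_eq_norm]
    linarith [hqd m n, hN m hm, hN n hn]
  obtain ⟨q₀, hq₀⟩ := cauchySeq_tendsto_of_complete hcau
  have l1 : Tendsto (fun n => modSMul Y (q n) tc) atTop (𝓝 (modSMul Y q₀ tc)) := by
    rw [tendsto_iff_norm_sub_tendsto_zero] at hq₀ ⊢
    refine squeeze_zero (fun _ => norm_nonneg _) (fun n => ?_)
      (by simpa using hq₀.mul_const ‖tc‖)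
    rw [← msmul_sub_left]
    exact norm_msmul_le _ _
  have l2 : Tendsto (fun n => modSMul Y (q n) tc) atTop (𝓝 p) := by
    rw [tendsto_iff_norm_sub_tendsto_zero]
    refine squeeze_zero (g := fun n => δ n ^ 2) (fun _ => norm_nonneg _) (fun n => ?_)
      (by simpa using hδt.pow 2)
    refine key _ (fun y => gr n y * t y - 1) _ (sq_nonneg _) (fun y => ?_) fun y => ?_
    · simp only [q]
      rw [ip_sub_left, ip_sub_right, ip_sub_right]
      simp only [ip_msmul_left, ip_msmul_right, hg, htcy, hbip, Complex.conj_ofReal]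
      push_cast
      ring
    · have e : t y ^ 2 * (gr n y * t y - 1) = -(δ n ^ 2 * (t y ^ 2 / (t y ^ 2 + δ n ^ 2))) := by
        have := (hden n y).ne'
        simp only [gr]
        field_simp
        ring
      have h1 : t y ^ 2 / (t y ^ 2 + δ n ^ 2) ≤ 1 :=
        (div_le_one (hden n y)).2 (by nlinarith [sq_nonneg (δ n)])
      have h2 : 0 ≤ t y ^ 2 / (t y ^ 2 + δ n ^ 2) := div_nonneg (sq_nonneg _) (hden n y).le
      rw [e, abs_neg, abs_of_nonneg (by positivity)]
      exact mul_le_of_le_one_right (sq_nonneg _) h1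
  have hpq : p = modSMul Y q₀ tc := tendsto_nhds_unique l2 l1
  refine Submodule.subset_span ⟨tc, q₀, ?_, hpq⟩
  rw [htcy]
  simp [ht, h, hb]

lemma ip_eq_zero_of_mem_fiberIdeal (p k : P) (y : Y) (hk : k ∈ fiberIdeal Y P y) :
    modIP Y p k y = 0 := by
  induction hk using Submodule.span_induction with
  | mem x hx =>
    obtain ⟨f, q, hf, rfl⟩ := hx
    rw [ip_msmul_right, hf, mul_zero]
  | zero => exact ip_zero_right p y
  | add a b _ _ ha hb => rw [ip_add_right, ha, hb, add_zero]
  | smul c a _ ha => rw [ip_csmul_right, ha, mul_zero]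

/-- The length of `p̂(y)` does not depend on the representative, so the infimum defining
`fibNormQ` is over a single value. -/
lemma fibNormQ_mk (p : P) (y : Y) : fibNormQ Y P y (fibMk Y P y p) = fibNormRep Y P y p := by
  have : {r | ∃ p' : P, fibMk Y P y p = fibMk Y P y p' ∧ r = fibNormRep Y P y p'}
      = {fibNormRep Y P y p} := by
    ext r
    simp only [Set.mem_ofPred_eq, Set.mem_singleton_iff]
    constructor
    · rintro ⟨p', hp, rfl⟩
      have hk : p - p' ∈ fiberIdeal Y P y := (Submodule.Quotient.eq _).1 hp
      obtain ⟨k, hk', rfl⟩ : ∃ k, k ∈ fiberIdeal Y P y ∧ p = p' + k := ⟨_, hk, by abel⟩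
      have e : modIP Y (p' + k) (p' + k) y = modIP Y p' p' y := by
        rw [ip_add_right, ip_eq_zero_of_mem_fiberIdeal _ _ _ hk', ip_add_left, ip_conj k p',
          ip_eq_zero_of_mem_fiberIdeal _ _ _ hk']
        simp
      simp only [fibNormRep, e]
    · rintro rfl
      exact ⟨p, rfl, rfl⟩
  rw [fibNormQ, this, csInf_singleton]

lemma fibMk_eq_iff [CompleteSpace P] (p q : P) (y : Y) :
    fibMk Y P y p = fibMk Y P y q ↔ modIP Y (p - q) (p - q) y = 0 := by
  constructor
  · intro h
    exact ip_eq_zero_of_mem_fiberIdeal _ _ _ ((Submodule.Quotient.eq _).1 h)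
  · intro h
    exact (Submodule.Quotient.eq _).2 (mem_fiberIdeal_of_ip_eq_zero _ _ (by rw [h]; rfl))

lemma continuous_hatSec (p : P) :
    @Continuous Y (TotalP Y P) _ (topEP Y P) fun y => ⟨y, fibMk Y P y p⟩ := by
  refine continuous_generateFrom_iff.2 ?_
  rintro S ⟨U, q, ε, hU, -, rfl⟩
  have : (fun y => (⟨y, fibMk Y P y p⟩ : TotalP Y P)) ⁻¹'
      {e : TotalP Y P | e.1 ∈ U ∧ fibNormQ Y P e.1 (e.2 - fibMk Y P e.1 q) < ε}
      = U ∩ {y | √(modIP Y (p - q) (p - q) y).re < ε} := by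
    ext y
    have e : fibMk Y P y p - fibMk Y P y q = fibMk Y P y (p - q) := rfl
    simp only [Set.mem_preimage, Set.mem_ofPred_eq, Set.mem_inter_iff, e, fibNormQ_mk, fibNormRep]
  rw [this]
  exact hU.inter (isOpen_lt (Complex.continuous_re.comp
    (modIP Y (p - q) (p - q)).continuous_toFun).sqrt continuous_const)

end ModuleLemmas

/-! ### Invariant integrals and a cutoff function -/

section Cutoff

variable {Y : Type} [TopologicalSpace Y] {Gp : LCGroupoid Y} (hs : HaarSystem Y Gp)

variable (Gp) in
/-- Over each point of `Y` there is a neighborhood `U` such that `f ∘ s`, restricted to the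
arrows with range in `U`, is supported over a compact set of sources.  By properness of the
groupoid, `f ∘ s` is then compactly supported on `r⁻¹(K)` for small compact `K`. -/
def SliceProper (f : Y → ℝ) : Prop :=
  ∀ y₀, ∃ U : Set Y, IsOpen U ∧ y₀ ∈ U ∧ ∃ L : Set Y, IsCompact L ∧
    ∀ h, Gp.r h ∈ U → f (Gp.s h) ≠ 0 → Gp.s h ∈ L

/-- The function `y ↦ ∫_{G^y} f(s(h)) dλ^y(h)`. -/
def orbInt (f : Y → ℝ) (y : Y) : ℝ := ∫ h, f (Gp.s h) ∂hs.lam y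

lemma HaarSystem.ae_r (y : Y) : ∀ᵐ h ∂hs.lam y, Gp.r h = y := hs.concentrated y

instance (y : Y) : MeasureTheory.IsFiniteMeasureOnCompacts (hs.lam y) :=
  ⟨fun _ hK => (hs.finiteOnCompacts y _ hK).lt_top⟩

lemma CcFun.integrable (F : CcFun Y Gp) (y : Y) : MeasureTheory.Integrable F.1 (hs.lam y) :=
  F.2.1.integrable_of_hasCompactSupport F.2.2

lemma sliceProper_of_hasCompactSupport {u : Y → ℝ} (hu : HasCompactSupport u) :
    SliceProper Gp u := fun _ =>
  ⟨Set.univ, isOpen_univ, trivial, tsupport u, hu, fun _ _ hh => subset_tsupport _ hh⟩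

/-- Localization to `C_c(G)`: a continuous function on `G` supported where `f ∘ s ≠ 0` becomes
compactly supported after multiplication by `χ ∘ r` for a bump function `χ`. -/
lemma SliceProper.exists_bump [T2Space Y] [LocallyCompactSpace Y] {f : Y → ℝ}
    (hf : SliceProper Gp f) {k : Gp.G → ℝ} (hk : Continuous k)
    (hfk : ∀ h, f (Gp.s h) = 0 → k h = 0) (y₀ : Y) :
    ∃ (χ : Y → ℝ) (V : Set Y) (F : CcFun Y Gp), IsOpen V ∧ y₀ ∈ V ∧ (∀ y ∈ V, χ y = 1) ∧
      ∀ h, F.1 h = ((k h * χ (Gp.r h) : ℝ) : ℂ) := by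
  obtain ⟨U, hU, hy, L, hL, hUL⟩ := hf y₀
  obtain ⟨K, hK, hyK, hKU⟩ := exists_compact_subset hU hy
  obtain ⟨χ, h1, h0, hc, -⟩ := exists_continuous_one_zero_of_isCompact hK hU.isClosed_compl
    (Set.disjoint_compl_right_iff_subset.2 hKU)
  refine ⟨χ, interior K, ⟨fun h => ((k h * χ (Gp.r h) : ℝ) : ℂ), ?_, ?_⟩, isOpen_interior, hyK,
    fun y hy => h1 (interior_subset hy), fun h => rfl⟩
  · exact Complex.continuous_ofReal.comp (hk.mul (χ.continuous.comp Gp.r_cont))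
  · have hc' : IsCompact (tsupport χ) := hc
    refine HasCompactSupport.intro (Gp.proper.isCompact_preimage (hc'.prod hL)) fun h hh => ?_
    by_contra hne
    have hne' : k h * χ (Gp.r h) ≠ 0 := fun h' => hne (by rw [h', Complex.ofReal_zero])
    have hχ : χ (Gp.r h) ≠ 0 := right_ne_zero_of_mul hne'
    refine hh ⟨subset_tsupport _ hχ, hUL h ?_ fun h' => left_ne_zero_of_mul hne' (hfk h h')⟩
    by_contra hr
    exact hχ (h0 hr)

lemma SliceProper.exists_cc [T2Space Y] [LocallyCompactSpace Y] {f : Y → ℝ}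
    (hfc : Continuous f) (hf : SliceProper Gp f) (y₀ : Y) :
    ∃ (χ : Y → ℝ) (V : Set Y) (F : CcFun Y Gp),
    IsOpen V ∧ y₀ ∈ V ∧ (∀ y ∈ V, χ y = 1) ∧
    (∀ h, F.1 h = ((f (Gp.s h) * χ (Gp.r h) : ℝ) : ℂ)) ∧
    ∀ y ∈ V, ∀ᵐ h ∂hs.lam y, F.1 h = (f (Gp.s h) : ℂ) := by
  obtain ⟨χ, V, F, hV, hy, h1, hF⟩ := hf.exists_bump (hfc.comp Gp.s_cont) (fun _ h => h) y₀
  refine ⟨χ, V, F, hV, hy, h1, hF, fun y hyV => ?_⟩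
  filter_upwards [hs.ae_r y] with h hh
  rw [hF, hh, h1 y hyV, mul_one]
  rfl

lemma orbInt_ofReal {f : Y → ℝ} {F : CcFun Y Gp} {y : Y}
    (h : ∀ᵐ h ∂hs.lam y, F.1 h = (f (Gp.s h) : ℂ)) :
    ((orbInt hs f y : ℝ) : ℂ) = ∫ h, F.1 h ∂hs.lam y := by
  rw [MeasureTheory.integral_congr_ae h, orbInt]
  exact integral_ofReal.symm

lemma continuous_orbInt [T2Space Y] [LocallyCompactSpace Y] {f : Y → ℝ}
    (hfc : Continuous f) (hf : SliceProper Gp f) :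
    Continuous (orbInt hs f) := by
  refine continuous_iff_continuousAt.2 fun y₀ => ?_
  obtain ⟨χ, V, F, hV, hy, -, -, hF⟩ := hf.exists_cc hs hfc y₀
  have hc := Complex.continuous_re.comp (hs.integral_continuous F.1 F.2.1 F.2.2)
  refine hc.continuousAt.congr ?_
  filter_upwards [hV.mem_nhds hy] with y hyV
  simp only [Function.comp_apply, ← orbInt_ofReal hs (hF y hyV), Complex.ofReal_re]

lemma integrable_orb [T2Space Y] [LocallyCompactSpace Y] {f : Y → ℝ}
    (hfc : Continuous f) (hf : SliceProper Gp f) (y : Y) :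
    MeasureTheory.Integrable (fun h => f (Gp.s h)) (hs.lam y) := by
  obtain ⟨χ, V, F, hV, hy, -, -, hF⟩ := hf.exists_cc hs hfc y
  refine (F.integrable hs y).re.congr ?_
  filter_upwards [hF y hy] with h hh
  rw [hh]
  exact Complex.ofReal_re _

/-- Left invariance of the Haar system makes `orbInt` constant along orbits. -/
lemma orbInt_invariant [T2Space Y] [LocallyCompactSpace Y] {f : Y → ℝ}
    (hfc : Continuous f) (hf : SliceProper Gp f) (g : Gp.G) :
    orbInt hs f (Gp.s g) = orbInt hs f (Gp.r g) := by
  obtain ⟨χ, V, F, hV, hy, h1, hF, hF'⟩ := hf.exists_cc hs hfc (Gp.r g)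
  have e := hs.left_invariant g F.1 F.2.1 F.2.2
  rw [← orbInt_ofReal hs (hF' _ hy)] at e
  have e2 : ∫ h, F.1 (Gp.mul g h) ∂hs.lam (Gp.s g) = ∫ h, (f (Gp.s h) : ℂ) ∂hs.lam (Gp.s g) := by
    refine MeasureTheory.integral_congr_ae ?_
    filter_upwards [hs.ae_r (Gp.s g)] with h hh
    rw [hF, Gp.s_mul g h hh.symm, Gp.r_mul g h hh.symm, h1 _ hy, mul_one]
  rw [e2] at e
  have e3 : ∫ h, (f (Gp.s h) : ℂ) ∂hs.lam (Gp.s g) = ((orbInt hs f (Gp.s g) : ℝ) : ℂ) :=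
    integral_ofReal
  exact Complex.ofReal_injective (e3.symm.trans e)

lemma orbInt_nonneg {f : Y → ℝ} (hf0 : ∀ y, 0 ≤ f y) (y : Y) : 0 ≤ orbInt hs f y :=
  MeasureTheory.integral_nonneg fun _ => hf0 _

lemma orbInt_pos [T2Space Y] [LocallyCompactSpace Y] {f : Y → ℝ}
    (hfc : Continuous f) (hf : SliceProper Gp f) (hf0 : ∀ y, 0 ≤ f y)
    (h : Gp.G) (hh : 0 < f (Gp.s h)) : 0 < orbInt hs f (Gp.r h) := by
  rw [orbInt, MeasureTheory.integral_pos_iff_support_of_nonneg (fun _ => hf0 _)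
    (integrable_orb hs hfc hf _), pos_iff_ne_zero]
  refine hs.full _ _ ?_ ⟨h, hh.ne', rfl⟩
  exact isOpen_ne_fun (hfc.comp Gp.s_cont) continuous_const

lemma exists_pos_of_orbInt_pos {f : Y → ℝ} {y : Y} (h : 0 < orbInt hs f y) :
    ∃ g, Gp.r g = y ∧ 0 < f (Gp.s g) := by
  by_contra! hn
  refine h.not_ge (MeasureTheory.integral_nonpos_of_ae ?_)
  filter_upwards [hs.ae_r y] with g hg
  exact hn g hg

/-- A bump function on a compact set, scaled so that its orbit integrals are at least one there. -/
lemma exists_orbInt_ge_one [T2Space Y] [LocallyCompactSpace Y] {K : Set Y} (hK : IsCompact K) :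
    ∃ u : Y → ℝ, Continuous u ∧ HasCompactSupport u ∧ (∀ y, 0 ≤ u y) ∧
      ∀ y ∈ K, 1 ≤ orbInt hs u y := by
  obtain ⟨v, h1, -, hc, h01⟩ := exists_continuous_one_zero_of_isCompact hK isClosed_empty
    (Set.disjoint_empty K)
  have hv : SliceProper Gp v := sliceProper_of_hasCompactSupport hc
  have hpos : ∀ y ∈ K, 0 < orbInt hs v y := by
    intro y hy
    have := orbInt_pos hs v.continuous hv (fun y => (h01 y).1) (Gp.unit y) (by
      rw [Gp.s_unit, h1 hy]; exact one_pos)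
    rwa [Gp.r_unit] at this
  obtain ⟨a, ha, hle⟩ := hK.exists_forall_le' (continuous_orbInt hs v.continuous hv).continuousOn
    hpos
  refine ⟨fun y => a⁻¹ * v y, by fun_prop, hc.mul_left,
    fun y => mul_nonneg (inv_nonneg.2 ha.le) (h01 y).1, fun y hy => ?_⟩
  have e : orbInt hs (fun y => a⁻¹ * v y) y = a⁻¹ * orbInt hs v y :=
    MeasureTheory.integral_const_mul _ _
  rw [e, ← div_eq_inv_mul, one_le_div ha]
  exact hle y hy

/-- A cutoff function for the proper groupoid: nonnegative, not vanishing identically on any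
orbit, and with support meeting the saturation of every small compact set in a relatively compact
set.  For a compact exhaustion `K n` with bump functions `u n` and invariant functions
`F n = orbInt (u n) ≥ 1` on `K n`, it is `∑ u n * (1 - ∑_{j<n} F j)⁺`; the second factor is
invariant and kills all terms with `n > m` on the saturation of `K m`. -/
lemma exists_cutoff (hs : HaarSystem Y Gp) [T2Space Y] [LocallyCompactSpace Y]
    [SecondCountableTopology Y] :
    ∃ c : Y → ℝ, Continuous c ∧ SliceProper Gp c ∧ (∀ y, 0 ≤ c y) ∧
      ∀ y, ∃ h, Gp.r h = y ∧ 0 < c (Gp.s h) := by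
  let K : CompactExhaustion Y := CompactExhaustion.choice Y
  choose u huc hus hu0 hu1 using fun n => exists_orbInt_ge_one hs (K.isCompact n)
  have husp : ∀ n, SliceProper Gp (u n) := fun n => sliceProper_of_hasCompactSupport (hus n)
  let F : ℕ → Y → ℝ := fun n => orbInt hs (u n)
  have hFc : ∀ n, Continuous (F n) := fun n => continuous_orbInt hs (huc n) (husp n)
  have hF0 : ∀ n y, 0 ≤ F n y := fun n y => orbInt_nonneg hs (hu0 n) y
  have hFi : ∀ n g, F n (Gp.s g) = F n (Gp.r g) := fun n g => orbInt_invariant hs (huc n) (husp n) g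
  let w : ℕ → Y → ℝ := fun n y => max 0 (1 - ∑ j ∈ Finset.range n, F j y)
  have hwc : ∀ n, Continuous (w n) := fun n => by fun_prop
  have hw0 : ∀ n y, 0 ≤ w n y := fun n y => le_max_left _ _
  have hwi : ∀ n g, w n (Gp.s g) = w n (Gp.r g) := fun n g => by simp only [w, hFi]
  have hwK : ∀ m n y, y ∈ K m → m < n → w n y = 0 := by
    intro m n y hy hmn
    refine max_eq_left (sub_nonpos.2 ((hu1 m y hy).trans ?_))
    exact Finset.single_le_sum (f := fun j => F j y) (fun j _ => hF0 j y) (Finset.mem_range.2 hmn)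
  let T : ℕ → Y → ℝ := fun n y => u n y * w n y
  have hT0 : ∀ n y, 0 ≤ T n y := fun n y => mul_nonneg (hu0 n y) (hw0 n y)
  have hfin : ∀ y, (Function.support fun n => T n y).Finite := by
    intro y
    obtain ⟨m, hm⟩ := K.exists_mem y
    refine (Set.finite_Iic m).subset fun n hn => ?_
    by_contra hnm
    exact hn (by simp only [T, hwK m n y hm (not_le.1 hnm), mul_zero])
  refine ⟨fun y => ∑ᶠ n, T n y, continuous_finsum (fun n => (huc n).mul (hwc n)) fun y => ?_,
    fun y => ?_, fun y => finsum_nonneg fun n => hT0 n y, fun y => ?_⟩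
  · obtain ⟨m, hm⟩ := K.exists_mem_nhds y
    refine ⟨K m, hm, (Set.finite_Iic m).subset ?_⟩
    rintro n ⟨z, hz, hzK⟩
    by_contra hnm
    exact hz (by simp only [T, hwK m n z hzK (not_le.1 hnm), mul_zero])
  · obtain ⟨m, hm⟩ := K.exists_mem_nhds y
    refine ⟨interior (K m), isOpen_interior, mem_interior_iff_mem_nhds.2 hm,
      ⋃ n ∈ Set.Iic m, tsupport (u n), (Set.finite_Iic m).isCompact_biUnion fun n _ => hus n,
      fun h hr hne => ?_⟩
    obtain ⟨n, hn⟩ : ∃ n, T n (Gp.s h) ≠ 0 := by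
      by_contra! h0
      exact hne (by simp only [h0, finsum_zero])
    have hnm : n ≤ m := by
      by_contra hnm
      refine hn ?_
      simp only [T, hwi, hwK m n _ (interior_subset hr) (not_le.1 hnm), mul_zero]
    exact Set.mem_biUnion (Set.mem_Iic.2 hnm) (subset_tsupport _ (left_ne_zero_of_mul hn))
  · have hex : ∃ n, 0 < F n y := by
      obtain ⟨m, hm⟩ := K.exists_mem y
      exact ⟨m, one_pos.trans_le (hu1 m y hm)⟩
    classical
    -- for the least `n` with `F n y > 0` the factor `w n` equals one at `y`
    let n := Nat.find hex
    obtain ⟨h, hh, hpos⟩ := exists_pos_of_orbInt_pos hs (Nat.find_spec hex)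
    refine ⟨h, hh, ?_⟩
    have hw : w n (Gp.s h) = 1 := by
      rw [hwi, hh]
      have : ∑ j ∈ Finset.range n, F j y = 0 := Finset.sum_eq_zero fun j hj =>
        le_antisymm (not_lt.1 (Nat.find_min hex (Finset.mem_range.1 hj))) (hF0 j y)
      simp only [w, this, sub_zero]
      exact max_eq_right zero_le_one
    have hTn : 0 < T n (Gp.s h) := by
      simp only [T, hw, mul_one]
      exact hpos
    exact hTn.trans_le (single_le_finsum n (hfin _) fun j => hT0 j _)

end Cutoff

/-! ### The bundles `L²(G)` and `L²(G)^∞` -/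

section Assembly

variable {Y : Type} [TopologicalSpace Y] {Gp : LCGroupoid Y} {hs : HaarSystem Y Gp}
variable {PG : Type} [NormedAddCommGroup PG] [NormedSpace ℂ PG]
  [HilbertCzeroModule Y PG]

/-- Functions in `C_c(G)` that agree on `G^y` have the same image in the fiber at `y`. -/
lemma PGData.fibMk_emb_congr [CompleteSpace PG] (d : PGData Gp hs PG) (F₁ F₂ : CcFun Y Gp) (y : Y)
    (h : ∀ g, Gp.r g = y → F₁.1 g = F₂.1 g) :
    fibMk Y PG y (d.emb F₁) = fibMk Y PG y (d.emb F₂) := by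
  let F₃ : CcFun Y Gp := ⟨F₁.1 - F₂.1, F₁.2.1.sub F₂.2.1, F₁.2.2.sub F₂.2.2⟩
  have e : d.emb F₁ - d.emb F₂ = d.emb F₃ :=
    sub_eq_of_eq_add (d.emb_add F₃ F₂ F₁ (sub_add_cancel _ _).symm)
  rw [fibMk_eq_iff, e, d.emb_inner]
  refine MeasureTheory.integral_eq_zero_of_ae ?_
  filter_upwards [hs.ae_r y] with g hg
  have : F₃.1 g = 0 := sub_eq_zero.2 (h g hg)
  rw [this, mul_zero]
  rfl

variable {Q : Type} [NormedAddCommGroup Q] [NormedSpace ℂ Q]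
  [HilbertCzeroModule Y Q]

lemma InftySumData.hasSum_ip (D : InftySumData Y (fun _ => PG) Q) (x x' : Q) (y : Y) :
    HasSum (fun i => modIP Y (D.proj i x) (D.proj i x') y) (modIP Y x x' y) := by
  let ev : C₀(Y, ℂ) →+ ℂ :=
    { toFun := fun f => f y, map_zero' := rfl, map_add' := fun _ _ => rfl }
  have hev : Continuous ev :=
    AddMonoidHomClass.continuous_of_bound ev 1 fun f => by
      rw [one_mul]; exact norm_apply_le_norm f y
  exact (D.proj_inner x x').map ev hev

/-- A vector in a fiber of `⊕ P_G` is determined by its coordinates. -/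
lemma InftySumData.fibMk_ext [CompleteSpace PG] [CompleteSpace Q]
    (D : InftySumData Y (fun _ => PG) Q) (x x' : Q) (y : Y)
    (h : ∀ i, fibMk Y PG y (D.proj i x) = fibMk Y PG y (D.proj i x')) :
    fibMk Y Q y x = fibMk Y Q y x' := by
  rw [fibMk_eq_iff]
  refine (D.hasSum_ip _ _ y).unique ?_
  have e : ∀ i, modIP Y (D.proj i (x - x')) (D.proj i (x - x')) y = 0 := fun i => by
    have e1 : D.proj i (x - x') = D.proj i x - D.proj i x' :=
      eq_sub_of_add_eq (by rw [← D.proj_add, sub_add_cancel])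
    rw [e1]
    exact (fibMk_eq_iff _ _ _).1 (h i)
  simp only [e]
  exact hasSum_zero

/-- The inclusion of `P_G` as the zeroth coordinate. -/
lemma InftySumData.exists_single (D : InftySumData Y (fun _ => PG) Q) (p : PG) :
    ∃ x : Q, D.proj 0 x = p ∧ ∀ i, i ≠ 0 → D.proj i x = 0 := by
  classical
  obtain ⟨x, hx⟩ := D.proj_surjective (fun i => if i = 0 then p else 0) (by
    refine summable_of_ne_finset_zero (s := {0}) fun i hi => ?_
    rw [Finset.mem_singleton] at hi
    simp only [hi, if_false]
    exact ZeroAtInftyContinuousMap.ext fun y => ip_zero_right _ y)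
  exact ⟨x, by simpa using hx 0, fun i hi => by simpa [hi] using hx i⟩

lemma GAction.act_zero (A : GAction Gp PG) (g : Gp.G) : A.act g 0 = 0 := by
  have h := A.act_add g 0 0
  rw [add_zero] at h
  exact left_eq_add.1 h

/-- A section that locally agrees with sections `x̂` is continuous. -/
lemma continuous_of_locally_hat (φ : (y : Y) → Fib Y Q y)
    (h : ∀ y₀, ∃ V : Set Y, IsOpen V ∧ y₀ ∈ V ∧ ∃ x : Q, ∀ y ∈ V, φ y = fibMk Y Q y x) :
    @Continuous Y (TotalP Y Q) _ (topEP Y Q) fun y => ⟨y, φ y⟩ := by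
  refine (@continuous_iff_continuousAt _ _ _ (topEP Y Q) _).2 fun y₀ => ?_
  obtain ⟨V, hV, hy, x, hx⟩ := h y₀
  have hc := (@continuous_iff_continuousAt _ _ _ (topEP Y Q) _).1 (continuous_hatSec (Y := Y) x) y₀
  refine @ContinuousAt.congr _ _ _ (topEP Y Q) _ _ _ hc ?_
  filter_upwards [hV.mem_nhds hy] with y hyV
  rw [hx y hyV]

end Assembly

/-- **Proposition 3.1.**  Let `G` be a second countable locally compact Hausdorff
proper groupoid with unit space `Y` and left Haar system.  Then there exists a
continuous, `G`-invariant section `φ` of the Hilbert bundle `L²(G)^∞ = E_{P_G^∞}`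
(not required to vanish at infinity) with `‖φ(y)‖ = 1` for all `y`, such that locally
`φ(y)` is of the form `((ψ₁)|_{G^y}, …, (ψ_n)|_{G^y}, 0, 0, …)` with `ψᵢ ∈ C_c(G)`. -/
theorem invariant_unit_section_of_L2_infty
    (Y : Type) [TopologicalSpace Y] [T2Space Y] [LocallyCompactSpace Y]
    [SecondCountableTopology Y]
    (Gp : LCGroupoid Y) (hs : HaarSystem Y Gp)
    (PG : Type) [NormedAddCommGroup PG] [NormedSpace ℂ PG] [CompleteSpace PG]
    [SecondCountableTopology PG] [HilbertCzeroModule Y PG]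
    (d : PGData Gp hs PG) (APG : GAction Gp PG) (hAPG : IsNaturalPGAction d APG)
    (PGinf : Type) [NormedAddCommGroup PGinf] [NormedSpace ℂ PGinf] [CompleteSpace PGinf]
    [SecondCountableTopology PGinf] [HilbertCzeroModule Y PGinf]
    (dinf : InftySumData Y (fun _ => PG) PGinf) (APGinf : GAction Gp PGinf)
    (hinf : IsCoordinateInftyAction dinf (fun _ => APG) APGinf) :
    ∃ φ : (y : Y) → Fib Y PGinf y,
      -- φ is a continuous section of L²(G)^∞
      (@Continuous Y (TotalP Y PGinf) _ (topEP Y PGinf) fun y => ⟨y, φ y⟩) ∧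
      -- of norm one everywhere
      (∀ y : Y, fibNormQ Y PGinf y (φ y) = 1) ∧
      -- G-invariant
      (∀ g : Gp.G, APGinf.act g (φ (Gp.s g)) = φ (Gp.r g)) ∧
      -- locally given by finitely many restrictions of C_c(G)-functions
      (∀ y₀ : Y, ∃ U : Set Y, IsOpen U ∧ y₀ ∈ U ∧
        ∃ (n : ℕ) (ψ : Fin n → CcFun Y Gp) (x : PGinf),
          (∀ i : Fin n, dinf.proj i x = d.emb (ψ i)) ∧
          (∀ i : ℕ, n ≤ i → dinf.proj i x = 0) ∧
          ∀ y ∈ U, φ y = fibMk Y PGinf y x) := by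
  obtain ⟨c, hcc, hcs, hc0, hcpos⟩ := exists_cutoff hs
  have hNc : Continuous (orbInt hs c) := continuous_orbInt hs hcc hcs
  have hN : ∀ y, 0 < orbInt hs c y := fun y => by
    obtain ⟨h, rfl, hh⟩ := hcpos y
    exact orbInt_pos hs hcc hcs hc0 h hh
  let k : Gp.G → ℝ := fun h => √(c (Gp.s h) / orbInt hs c (Gp.r h))
  have hk : Continuous k :=
    ((hcc.comp Gp.s_cont).div (hNc.comp Gp.r_cont) fun h => (hN _).ne').sqrt
  choose χ V ψ hV hyV hχ hψ using fun y => hcs.exists_bump hk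
    (fun h hh => by simp only [k, hh, zero_div, Real.sqrt_zero]) y
  choose x hx0 hx using fun y => dinf.exists_single (d.emb (ψ y))
  -- the section does not depend on the choice of the bump functions `χ`
  have hloc : ∀ y₀, ∀ y ∈ V y₀, fibMk Y PGinf y (x y) = fibMk Y PGinf y (x y₀) := by
    intro y₀ y hy
    refine dinf.fibMk_ext _ _ _ fun i => ?_
    rcases eq_or_ne i 0 with rfl | hi
    · rw [hx0, hx0]
      refine d.fibMk_emb_congr _ _ _ fun g hg => ?_
      rw [hψ, hψ, hg, hχ y y (hyV y), hχ y₀ y hy]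
    · rw [hx _ i hi, hx _ i hi]
  refine ⟨fun y => fibMk Y PGinf y (x y), ?_, fun y => ?_, fun g => ?_, fun y₀ => ?_⟩
  · exact continuous_of_locally_hat _ fun y₀ => ⟨V y₀, hV y₀, hyV y₀, x y₀, hloc y₀⟩
  · have e1 : modIP Y (x y) (x y) y = modIP Y (d.emb (ψ y)) (d.emb (ψ y)) y := by
      refine (dinf.hasSum_ip _ _ y).unique ?_
      have := hasSum_single (f := fun i => modIP Y (dinf.proj i (x y)) (dinf.proj i (x y)) y) 0
        fun i hi => by rw [hx y i hi, ip_zero_right]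
      rwa [hx0] at this
    have e2 : ∫ h, conj ((ψ y).1 h) * (ψ y).1 h ∂hs.lam y
        = ∫ h, ((c (Gp.s h) / orbInt hs c y : ℝ) : ℂ) ∂hs.lam y := by
      refine MeasureTheory.integral_congr_ae ?_
      filter_upwards [hs.ae_r y] with h hh
      rw [hψ, hh, hχ y y (hyV y), mul_one, Complex.conj_ofReal, ← Complex.ofReal_mul]
      simp only [k]
      rw [Real.mul_self_sqrt (div_nonneg (hc0 _) (hN _).le), hh]
    have e3 : ∫ h, ((c (Gp.s h) / orbInt hs c y : ℝ) : ℂ) ∂hs.lam y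
        = ((orbInt hs c y / orbInt hs c y : ℝ) : ℂ) := by
      refine integral_ofReal.trans (congrArg Complex.ofReal ?_)
      exact MeasureTheory.integral_div _ _
    rw [fibNormQ_mk, fibNormRep, e1, d.emb_inner, e2, e3, div_self (hN y).ne']
    simp
  · obtain ⟨x', hx'⟩ : ∃ x', fibMk Y PGinf (Gp.r g) x' =
        APGinf.act g (fibMk Y PGinf (Gp.s g) (x (Gp.s g))) := Submodule.Quotient.mk_surjective _ _
    rw [← hx']
    refine dinf.fibMk_ext _ _ _ fun i => ?_
    rw [← hinf g _ x' hx'.symm i]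
    rcases eq_or_ne i 0 with rfl | hi
    · rw [hx0, hx0]
      refine hAPG g _ _ fun h hh => ?_
      have hc : Gp.s (Gp.inv g) = Gp.r h := (Gp.s_inv g).trans hh.symm
      -- `k (g⁻¹h) = k h` because the orbit integral of `c` is invariant
      rw [hψ, hψ, Gp.r_mul _ _ hc, Gp.r_inv, hh, hχ _ _ (hyV _), hχ _ _ (hyV _)]
      simp only [k]
      rw [Gp.s_mul _ _ hc, Gp.r_mul _ _ hc, Gp.r_inv, hh, orbInt_invariant hs hcc hcs g]
    · rw [hx _ i hi, hx _ i hi]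
      exact APG.act_zero g
  · refine ⟨V y₀, hV y₀, hyV y₀, 1, fun _ => ψ y₀, x y₀, fun i => ?_, fun i hi => ?_, hloc y₀⟩
    · rw [Subsingleton.elim i 0]
      exact hx0 y₀
    · exact hx y₀ i (by omega)

end Stabilization
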